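/- For every k ≥ N0 + 1, regarding C(L)/L as a real number for L in the range |p_{k−1}| + 2 ≤ L ≤ |p_k| + 1: (i) for every such L one has C(L)/L ≥ min{#A_ev − (n_k − 1)/n_k, #A_ev − (n_{k−1} − 1)/n_{k−1}} > #A_ev − 1; (ii) the maximum of C(L)/L over this range equals #A_ev − (n_{k−1} − 1)/(2 n_{k−1} − 1), it is attained at L = 2|p_{k−1}| − |p_{k−2}| + 1, and it is at most #A_ev − 1/3. -/

import Mathlib

open Filter

/-- The blocks `p k` of the simple Toeplitz subshift coded by `a` and `n`:
`p 0 = a 0 ^ (n 0 - 1)` and `p (k+1)` consists of `n (k+1)` copies of `p k`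
separated by `n (k+1) - 1` single letters `a (k+1)`. -/
def ToeplitzBlock {A : Type*} (a : ℕ → A) (n : ℕ → ℕ) : ℕ → List A
  | 0 => List.replicate (n 0 - 1) (a 0)
  | k + 1 => List.intercalate [a (k + 1)] (List.replicate (n (k + 1)) (ToeplitzBlock a n k))

/-- `lenPrev a n k = |p (k-1)|`, with the convention `|p (-1)| = 0`. -/
def lenPrev {A : Type*} (a : ℕ → A) (n : ℕ → ℕ) : ℕ → ℕ
  | 0 => 0
  | k + 1 => (ToeplitzBlock a n k).length

/-- The language of the simple Toeplitz subshift: all finite words occurring as a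
factor of some block `p k`. -/
def ToeplitzLang {A : Type*} (a : ℕ → A) (n : ℕ → ℕ) : Set (List A) :=
  {u | ∃ k, u <:+: ToeplitzBlock a n k}

/-- The complexity function `C L`. -/
noncomputable def cmpl {A : Type*} (a : ℕ → A) (n : ℕ → ℕ) (L : ℕ) : ℕ :=
  Set.ncard {u | u ∈ ToeplitzLang a n ∧ u.length = L}

/-- The palindrome complexity function `P L`. -/
noncomputable def palCmpl {A : Type*} (a : ℕ → A) (n : ℕ → ℕ) (L : ℕ) : ℕ :=
  Set.ncard {u | u ∈ ToeplitzLang a n ∧ u.length = L ∧ u.reverse = u}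

/-- `Ak a k = {a j : j ≥ k}`. -/
def Ak {A : Type*} (a : ℕ → A) (k : ℕ) : Set A := {x | ∃ j, k ≤ j ∧ a j = x}

/-- The eventual alphabet `A_ev = ⋂ k, A_k`. -/
def Aev {A : Type*} (a : ℕ → A) : Set A := ⋂ k, Ak a k

/-- `Kf a k = min {j > k : {a (k+1), …, a j} = A (k+1)}`. -/
noncomputable def Kf {A : Type*} (a : ℕ → A) (k : ℕ) : ℕ :=
  sInf {j | k < j ∧ {x | ∃ i, k + 1 ≤ i ∧ i ≤ j ∧ a i = x} = Ak a (k + 1)}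

/-- The positions `m i` at which `Kf` increases: `m 0 = 0` and
`m (i+1) = min {j > m i : Kf j > Kf (m i)}`. -/
noncomputable def mseq {A : Type*} (a : ℕ → A) : ℕ → ℕ
  | 0 => 0
  | i + 1 => sInf {j | mseq a i < j ∧ Kf a (mseq a i) < Kf a j}

/-- The repetitivity function `R L`: the least `L'` such that every word of
length `L` of the language is a factor of every word of length `L'`. -/
noncomputable def repet {A : Type*} (a : ℕ → A) (n : ℕ → ℕ) (L : ℕ) : ℕ :=
  sInf {L' | ∀ u ∈ ToeplitzLang a n, u.length = L →
    ∀ w ∈ ToeplitzLang a n, w.length = L' → u <:+: w}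

/-!
Write `q l = n 0 ⋯ n (l - 1)`, so that `|p k| + 1 = q (k + 1)`. The letter of every block at
position `j ≥ 1` is `a l`, where `l` is least with `q (l + 1) ∤ j`. This rule makes sense at all
nonzero integers; completed by a free letter `c` at the origin it gives a two-sided sequence `T c`.
A window of length `L ≤ q k` meets at most one multiple of `q k`; recentring there shows that the
words of length `L` are exactly the windows of `T c` inside `(-q k, q k)` with `c ∈ A_k`.

Let `q (k + 1) < L ≤ q (k + 2)` and suppose that `a k` and `a (k + 1)` are among the `m` letters of
`A_{k+2}`. Inside `(-q (k + 2), q (k + 2))` the sequence `T (a (k + 1))` is `q (k + 1)`-periodic,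
and it contributes `q (k + 1)` words. Every other letter contributes its `L` windows through the
origin. A window of length at least `2 * q l` determines its position modulo `q l`; hence the only
coincidences are among the windows of `T (a k)` inside `(-q (k + 1), q (k + 1))`, where `T (a k)` is
`q k`-periodic. Therefore

  `C(L) = (m - 1) L + min (q (k + 1)) (L - q (k + 1) + q k)`.

The lower bound compares each of the two terms of the minimum with `L`, and the upper bound is a
weighted average of them, with equality where they agree, at `L = 2 q (k + 1) - q k`.
-/

namespace SimpleToeplitz

variable {A : Type*}

section Window

/-- The word of length `L` read off a two-sided sequence `x` from position `s` on. -/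
def window (x : ℤ → A) (s : ℤ) (L : ℕ) : List A :=
  (List.range L).map fun i : ℕ => x (s + i)

variable {x y : ℤ → A} {s t : ℤ} {L : ℕ}

@[simp]
lemma length_window (x : ℤ → A) (s : ℤ) (L : ℕ) : (window x s L).length = L := by
  simp [window]

lemma window_one (x : ℤ → A) (s : ℤ) : window x s 1 = [x s] := by
  simp [window]

lemma window_add (x : ℤ → A) (s : ℤ) (L M : ℕ) :
    window x s (L + M) = window x s L ++ window x (s + L) M := by
  simp [window, List.range_add, Function.comp_def, add_assoc]

lemma window_eq_window_iff :
    window x s L = window y t L ↔ ∀ j, s ≤ j → j < s + L → x j = y (j + (t - s)) := by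
  simp only [window, List.map_inj_left, List.mem_range]
  refine ⟨fun h j hsj hj => ?_, fun h i hi => ?_⟩
  · have := h (j - s).toNat (by omega)
    rw [Int.toNat_of_nonneg (by omega)] at this
    convert this using 2 <;> ring
  · rw [h (s + i) (by omega) (by omega)]
    congr 1
    ring

lemma infix_window_iff {u : List A} {N : ℕ} :
    u <:+: window x s N ↔ ∃ t, s ≤ t ∧ t + u.length ≤ s + N ∧ u = window x t u.length := by
  constructor
  · rintro ⟨v, w, hvw⟩
    have hlen := congrArg List.length hvw
    simp only [List.length_append, length_window] at hlen
    rw [← hlen, window_add, window_add] at hvw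
    exact ⟨s + v.length, by omega, by omega,
      List.append_inj_right (List.append_inj_left hvw (by simp)) (by simp)⟩
  · rintro ⟨t, hst, htN, hu⟩
    obtain ⟨i, hi⟩ := Int.eq_ofNat_of_zero_le (show 0 ≤ t - s by omega)
    obtain ⟨j, hj⟩ := Int.eq_ofNat_of_zero_le (show 0 ≤ s + N - (t + u.length) by omega)
    obtain rfl : t = s + i := by omega
    obtain rfl : N = i + u.length + j := by omega
    exact ⟨window x s i, window x (s + (i + u.length : ℕ)) j, by rw [window_add, window_add, ← hu]⟩

lemma intercalate_replicate_succ (y : A) (p : List A) (m : ℕ) :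
    List.intercalate [y] (List.replicate (m + 2) p) =
      List.intercalate [y] (List.replicate (m + 1) p) ++ [y] ++ p := by
  induction m with
  | zero => simp [List.replicate_succ]
  | succ m ih =>
    calc List.intercalate [y] (List.replicate (m + 3) p)
        = p ++ [y] ++ List.intercalate [y] (List.replicate (m + 2) p) := by
          simp [List.replicate_succ]
      _ = p ++ [y] ++ (List.intercalate [y] (List.replicate (m + 1) p) ++ [y] ++ p) := by rw [ih]
      _ = List.intercalate [y] (List.replicate (m + 2) p) ++ [y] ++ p := by
          simp [List.replicate_succ]

lemma window_eq_intercalate {y : A} {d m : ℕ}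
    (hsep : ∀ r : ℕ, r < m → x ((r + 1) * (d + 1)) = y)
    (hcopy : ∀ r : ℕ, r ≤ m → window x (r * (d + 1) + 1) d = window x 1 d) :
    window x 1 (m * (d + 1) + d) =
      List.intercalate [y] (List.replicate (m + 1) (window x 1 d)) := by
  induction m with
  | zero => simp
  | succ m ih =>
    have hsep_last : x (1 + (m * (d + 1) + d : ℕ)) = y := by
      rw [← hsep m m.lt_succ_self]
      congr 1
      push_cast
      ring
    have hcopy_last : window x (1 + (m * (d + 1) + d + 1 : ℕ)) d = window x 1 d := by
      rw [← hcopy (m + 1) le_rfl]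
      congr 1
      push_cast
      ring
    have hlen : (m + 1) * (d + 1) + d = m * (d + 1) + d + 1 + d := by ring
    rw [intercalate_replicate_succ, ← ih (fun r hr => hsep r (by omega))
      (fun r hr => hcopy r (by omega)), hlen, window_add, window_add, window_one, hsep_last,
      hcopy_last]

end Window

/-- `period n l = n 0 ⋯ n (l-1)`, so that `|p k| + 1 = period n (k + 1)` and the empty product
matches the convention `|p (-1)| = 0`. -/
def period (n : ℕ → ℕ) (l : ℕ) : ℕ := ∏ i ∈ Finset.range l, n i

open Classical in
/-- The two-sided Toeplitz sequence with a free letter `c` at the origin: at `j ≠ 0` it carries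
`a l`, where `l` is the least index such that `period n (l + 1)` does not divide `j`. -/
noncomputable def toeplitz (a : ℕ → A) (n : ℕ → ℕ) (c : A) (j : ℤ) : A :=
  if h : ∃ l, ¬ (period n (l + 1) : ℤ) ∣ j then a (Nat.find h) else c

variable {a : ℕ → A} {n : ℕ → ℕ} {c d : A} {k l L : ℕ} {s t j e q : ℤ}

section Period

@[simp]
lemma period_zero (n : ℕ → ℕ) : period n 0 = 1 := by
  simp [period]

lemma period_succ (n : ℕ → ℕ) (l : ℕ) : period n (l + 1) = n l * period n l := by
  rw [period, Finset.prod_range_succ_comm, period]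

lemma period_pos (hn : ∀ k, 2 ≤ n k) (l : ℕ) : 0 < period n l :=
  Finset.prod_pos fun i _ => two_pos.trans_le (hn i)

lemma two_mul_period_le (hn : ∀ k, 2 ≤ n k) (l : ℕ) : 2 * period n l ≤ period n (l + 1) :=
  period_succ n l ▸ Nat.mul_le_mul_right _ (hn l)

lemma period_dvd_period {m : ℕ} (h : l ≤ m) : (period n l : ℤ) ∣ period n m :=
  Int.natCast_dvd_natCast.mpr (Finset.prod_dvd_prod_of_subset _ _ _ (Finset.range_mono h))

lemma period_mono (hn : ∀ k, 2 ≤ n k) : Monotone (period n) := fun _ m h =>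
  Nat.le_of_dvd (period_pos hn m) (Int.natCast_dvd_natCast.mp (period_dvd_period h))

lemma exists_mem_Ioc_dvd_sub (hq : 0 < q) (b s : ℤ) : ∃ t, b < t ∧ t ≤ b + q ∧ q ∣ t - s := by
  obtain ⟨hlt, hle⟩ := toIocMod_mem_Ioc hq b s
  exact ⟨_, hlt, hle, -toIocDiv hq b s, by rw [toIocMod_sub_self]; simp [mul_comm]⟩

lemma exists_dvd_not_dvd_succ (hn : ∀ k, 2 ≤ n k) (s : ℤ) (hL : 2 * period n l ≤ L) :
    ∃ j, s ≤ j ∧ j < s + L ∧ (period n l : ℤ) ∣ j ∧ ¬ (period n (l + 1) : ℤ) ∣ j := by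
  have hpos := period_pos hn l
  have hdouble := two_mul_period_le hn l
  obtain ⟨j, hsj, hj, hdvd⟩ := exists_mem_Ioc_dvd_sub (q := period n l) (by omega) (s - 1) 0
  rw [sub_zero] at hdvd
  by_cases hj' : (period n (l + 1) : ℤ) ∣ j
  · refine ⟨j + period n l, by omega, by omega, dvd_add_self_right.mpr hdvd, fun h => ?_⟩
    have := Int.le_of_dvd (by omega) ((dvd_add_right hj').mp h)
    omega
  · exact ⟨j, by omega, by omega, hdvd, hj'⟩

lemma exists_lt_dvd_not_dvd_succ (h : ¬ (period n l : ℤ) ∣ j) :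
    ∃ m < l, (period n m : ℤ) ∣ j ∧ ¬ (period n (m + 1) : ℤ) ∣ j := by
  induction l with
  | zero => simp at h
  | succ l ih =>
    by_cases hl : (period n l : ℤ) ∣ j
    · exact ⟨l, l.lt_succ_self, hl, h⟩
    · obtain ⟨m, hm, hdvd⟩ := ih hl
      exact ⟨m, by omega, hdvd⟩

end Period

section Toeplitz

@[simp]
lemma toeplitz_zero (a : ℕ → A) (n : ℕ → ℕ) (c : A) : toeplitz a n c 0 = c := by
  simp [toeplitz]

lemma toeplitz_of_dvd_of_not_dvd (c : A) (hdvd : (period n l : ℤ) ∣ j)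
    (hnot : ¬ (period n (l + 1) : ℤ) ∣ j) : toeplitz a n c j = a l := by
  have h : ∃ l, ¬ (period n (l + 1) : ℤ) ∣ j := ⟨l, hnot⟩
  rw [toeplitz, dif_pos h]
  congr 1
  exact (Nat.find_eq_iff h).mpr
    ⟨hnot, fun m hm => not_not.mpr ((period_dvd_period hm).trans hdvd)⟩

lemma toeplitz_of_abs_lt (c : A) (hdvd : (period n l : ℤ) ∣ j) (hj : j ≠ 0)
    (hlt : |j| < period n (l + 1)) : toeplitz a n c j = a l :=
  toeplitz_of_dvd_of_not_dvd c hdvd fun h => hj (Int.eq_zero_of_abs_lt_dvd h hlt)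

lemma toeplitz_mem_Ak (hc : c ∈ Ak a l) (hj : (period n l : ℤ) ∣ j) :
    toeplitz a n c j ∈ Ak a l := by
  by_cases h : ∃ m, ¬ (period n m : ℤ) ∣ j
  · obtain ⟨m, hm⟩ := h
    obtain ⟨i, -, hdvd, hnot⟩ := exists_lt_dvd_not_dvd_succ hm
    refine ⟨i, ?_, (toeplitz_of_dvd_of_not_dvd c hdvd hnot).symm⟩
    by_contra! hlt
    exact hnot ((period_dvd_period hlt).trans hj)
  · rwa [toeplitz, dif_neg fun ⟨m, hm⟩ => h ⟨m + 1, hm⟩]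

lemma toeplitz_add_of_not_dvd (c d : A) (hj : ¬ (period n l : ℤ) ∣ j)
    (he : (period n l : ℤ) ∣ e) : toeplitz a n c (j + e) = toeplitz a n d j := by
  obtain ⟨m, hm, hdvd, hnot⟩ := exists_lt_dvd_not_dvd_succ hj
  rw [toeplitz_of_dvd_of_not_dvd d hdvd hnot, toeplitz_of_dvd_of_not_dvd c
    (dvd_add hdvd ((period_dvd_period hm.le).trans he))
    ((dvd_add_left ((period_dvd_period hm).trans he)).not.mpr hnot)]

lemma toeplitz_eq_of_ne_zero (c d : A) (hj : j ≠ 0) (hlt : |j| < period n l) :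
    toeplitz a n c j = toeplitz a n d j := by
  simpa using toeplitz_add_of_not_dvd (a := a) (e := 0) c d
    (fun h => hj (Int.eq_zero_of_abs_lt_dvd h hlt)) (dvd_zero _)

lemma toeplitz_add_of_dvd (c : A) (he : (period n l : ℤ) ∣ e) (hlt : |j| < period n l) :
    toeplitz a n c (j + e) = toeplitz a n (toeplitz a n c e) j := by
  by_cases hj : j = 0
  · simp [hj]
  · exact toeplitz_add_of_not_dvd _ _ (fun h => hj (Int.eq_zero_of_abs_lt_dvd h hlt)) he

lemma toeplitz_self_add_of_dvd (he : (period n l : ℤ) ∣ e) (hj : |j| < period n (l + 1))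
    (hje : |j + e| < period n (l + 1)) :
    toeplitz a n (a l) (j + e) = toeplitz a n (a l) j := by
  have letter : ∀ i : ℤ, (period n l : ℤ) ∣ i → |i| < period n (l + 1) →
      toeplitz a n (a l) i = a l := fun i hi hlt => by
    by_cases h0 : i = 0
    · rw [h0, toeplitz_zero]
    · exact toeplitz_of_abs_lt _ hi h0 hlt
  by_cases hdvd : (period n l : ℤ) ∣ j
  · rw [letter _ hdvd hj, letter _ (dvd_add hdvd he) hje]
  · exact toeplitz_add_of_not_dvd _ _ hdvd he

lemma window_toeplitz_recenter (c : A) (he : (period n l : ℤ) ∣ e)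
    (hs : -(period n l : ℤ) < s - e) (hsL : s - e + L ≤ period n l) :
    window (toeplitz a n c) s L = window (toeplitz a n (toeplitz a n c e)) (s - e) L := by
  refine window_eq_window_iff.mpr fun j hsj hj => ?_
  have hlt : |j - e| < period n l := abs_lt.mpr ⟨by omega, by omega⟩
  rw [show j + (s - e - s) = j - e by ring, ← toeplitz_add_of_dvd c he hlt, sub_add_cancel]

lemma window_toeplitz_letter_irrel (c d : A) (hs : -(period n l : ℤ) < s)
    (hsL : s + L ≤ period n l) (h0 : s ≤ -L ∨ 0 < s) :
    window (toeplitz a n c) s L = window (toeplitz a n d) s L := by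
  refine window_eq_window_iff.mpr fun j hsj hj => ?_
  rw [sub_self, add_zero]
  exact toeplitz_eq_of_ne_zero (l := l) c d (by omega) (abs_lt.mpr ⟨by omega, by omega⟩)

lemma window_toeplitz_self_periodic (hd : (period n l : ℤ) ∣ t - s)
    (hs : -(period n (l + 1) : ℤ) < s) (hsL : s + L ≤ period n (l + 1))
    (ht : -(period n (l + 1) : ℤ) < t) (htL : t + L ≤ period n (l + 1)) :
    window (toeplitz a n (a l)) s L = window (toeplitz a n (a l)) t L :=
  window_eq_window_iff.mpr fun j hsj hj => (toeplitz_self_add_of_dvd hd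
    (abs_lt.mpr ⟨by omega, by omega⟩) (abs_lt.mpr ⟨by omega, by omega⟩)).symm

end Toeplitz

section Language

lemma toeplitzBlock_eq_window (hn : ∀ k, 2 ≤ n k) (c : A) (k : ℕ) :
    ToeplitzBlock a n k = window (toeplitz a n c) 1 (period n (k + 1) - 1) := by
  induction k with
  | zero =>
    refine (List.eq_replicate_iff.mpr ⟨by simp [period], fun b hb => ?_⟩).symm
    simp only [window, List.mem_map, List.mem_range] at hb
    obtain ⟨i, hi, rfl⟩ := hb
    exact toeplitz_of_abs_lt c (by simp) (by omega) (abs_lt.mpr ⟨by omega, by omega⟩)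
  | succ k ih =>
    have hpos := period_pos hn (k + 1)
    obtain ⟨d, hd⟩ : ∃ d, period n (k + 1) = d + 1 := ⟨_, (Nat.sub_add_cancel hpos).symm⟩
    obtain ⟨m, hm⟩ : ∃ m, n (k + 1) = m + 1 :=
      ⟨_, (Nat.sub_add_cancel (one_le_two.trans (hn (k + 1)))).symm⟩
    have hq : (period n (k + 1) : ℤ) = d + 1 := by exact_mod_cast hd
    have hq' : period n (k + 1 + 1) = m * (d + 1) + d + 1 := by
      rw [period_succ, hd, hm]; ring
    rw [ToeplitzBlock, ih, hq', hd, hm, Nat.add_sub_cancel, Nat.add_sub_cancel]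
    refine (window_eq_intercalate (fun r hr => ?_) fun r _ => ?_).symm
    · have hle : (r + 1) * (d + 1) ≤ m * (d + 1) := Nat.mul_le_mul_right _ hr
      refine toeplitz_of_abs_lt c (hq ▸ dvd_mul_left _ _) (by positivity) ?_
      rw [abs_of_nonneg (by positivity)]
      exact_mod_cast (by omega : (r + 1) * (d + 1) < period n (k + 1 + 1))
    · rw [window_toeplitz_recenter c (l := k + 1) (e := r * (d + 1)) (hq ▸ dvd_mul_left _ _)
        (by omega) (by omega), add_sub_cancel_left]
      exact window_toeplitz_letter_irrel _ _ (l := k + 1) (by omega) (by omega) (by omega)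

lemma length_toeplitzBlock (hn : ∀ k, 2 ≤ n k) (k : ℕ) :
    (ToeplitzBlock a n k).length + 1 = period n (k + 1) := by
  rw [toeplitzBlock_eq_window hn (a 0), length_window, Nat.sub_add_cancel (period_pos hn _)]

lemma lenPrev_add_one (hn : ∀ k, 2 ≤ n k) (k : ℕ) : lenPrev a n k + 1 = period n k := by
  cases k with
  | zero => simp [lenPrev]
  | succ k => exact length_toeplitzBlock hn k

lemma exists_window_of_mem_toeplitzLang (hn : ∀ k, 2 ≤ n k) {u : List A}
    (hu : u ∈ ToeplitzLang a n) (hL : u.length ≤ period n k) :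
    ∃ c ∈ Ak a k, ∃ s : ℤ, -(period n k : ℤ) < s ∧ s + u.length ≤ period n k ∧
      u = window (toeplitz a n c) s u.length := by
  obtain ⟨K, hK⟩ := hu
  rw [toeplitzBlock_eq_window hn (a k), infix_window_iff] at hK
  obtain ⟨s, -, -, hs⟩ := hK
  have hpos := period_pos hn k
  -- The last multiple of the period before the end of the window is the only one that can lie
  -- inside, so it may serve as the origin.
  obtain ⟨e, hlt, hle, he⟩ := exists_mem_Ioc_dvd_sub (q := period n k) (by omega)
    (s + u.length - 1 - period n k) 0
  rw [sub_zero] at he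
  refine ⟨toeplitz a n (a k) e, toeplitz_mem_Ak ⟨k, le_rfl, rfl⟩ he, s - e, by omega, by omega, ?_⟩
  rwa [← window_toeplitz_recenter _ he (by omega) (by omega)]

lemma window_mem_toeplitzLang (hn : ∀ k, 2 ≤ n k) (hc : c ∈ Ak a k)
    (hs : -(period n k : ℤ) < s) (hsL : s + L ≤ period n k) :
    window (toeplitz a n c) s L ∈ ToeplitzLang a n := by
  obtain ⟨m, hkm, rfl⟩ := hc
  have hpos := period_pos hn m
  have hdouble := two_mul_period_le hn m
  have hmono : period n k ≤ period n m := period_mono hn hkm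
  have hletter : toeplitz a n (a 0) (period n m) = a m :=
    toeplitz_of_abs_lt _ dvd_rfl (by omega) (abs_lt.mpr ⟨by omega, by omega⟩)
  have hshift : window (toeplitz a n (a m)) s L =
      window (toeplitz a n (a 0)) (s + period n m) L := by
    rw [window_toeplitz_recenter (a 0) (dvd_refl (period n m : ℤ)) (by omega) (by omega), hletter,
      add_sub_cancel_right]
  refine ⟨m, ?_⟩
  rw [hshift, toeplitzBlock_eq_window hn (a 0), infix_window_iff]
  rw [length_window]
  exact ⟨s + period n m, by omega, by omega, rfl⟩

end Language

section Recognizability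

lemma toeplitz_eq_of_window_eq (h : window (toeplitz a n c) s L = window (toeplitz a n d) t L)
    (hdvd : (period n l : ℤ) ∣ t - s) (hnot : ¬ (period n (l + 1) : ℤ) ∣ t - s)
    (hsj : s ≤ j) (hjL : j < s + L) (hj : (period n (l + 1) : ℤ) ∣ j) :
    toeplitz a n c j = a l := by
  rw [window_eq_window_iff.mp h j hsj hjL]
  exact toeplitz_of_dvd_of_not_dvd d (dvd_add ((period_dvd_period l.le_succ).trans hj) hdvd)
    ((dvd_add_right hj).not.mpr hnot)

/-- Any window of length at least `2 * period n (l + 1)` contains a position with letter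
`a (l + 1)`; an offset divisible by `period n l` only would put the letter `a l` there. -/
theorem dvd_sub_of_window_eq (hn : ∀ k, 2 ≤ n k) (ha : ∀ k, a k ≠ a (k + 1))
    (h : window (toeplitz a n c) s L = window (toeplitz a n d) t L)
    (hL : 2 * period n l ≤ L) : (period n l : ℤ) ∣ t - s := by
  induction l with
  | zero => simp
  | succ l ih =>
    have hdouble := two_mul_period_le hn l
    by_contra hnot
    obtain ⟨j, hsj, hj, hdvd, hndvd⟩ := exists_dvd_not_dvd_succ hn s hL
    have hl := toeplitz_eq_of_window_eq h (ih (by omega)) hnot hsj hj hdvd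
    exact ha l (hl.symm.trans (toeplitz_of_dvd_of_not_dvd c hdvd hndvd))

/-- Each multiple of `period n (k + 1)` in the window must carry `a k`, and only the origin can. -/
lemma eq_and_lt_and_le_of_not_dvd (hn : ∀ k, 2 ≤ n k) (ha : ∀ k, a k ≠ a (k + 1))
    (h : window (toeplitz a n c) s L = window (toeplitz a n d) t L) (hL : period n (k + 1) < L)
    (hs : -(period n (k + 1 + 1) : ℤ) < s) (hsL : s + L ≤ period n (k + 1 + 1))
    (hnot : ¬ (period n (k + 1) : ℤ) ∣ t - s) :
    c = a k ∧ -(period n (k + 1) : ℤ) < s ∧ s + L ≤ period n (k + 1) := by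
  have hdouble := two_mul_period_le hn k
  have hpos := period_pos hn (k + 1)
  have hletter : ∀ j : ℤ, s ≤ j → j < s + L → (period n (k + 1) : ℤ) ∣ j →
      toeplitz a n c j = a k := fun j =>
    toeplitz_eq_of_window_eq h (dvd_sub_of_window_eq hn ha h (by omega)) hnot
  have horigin : ∀ j : ℤ, s ≤ j → j < s + L → (period n (k + 1) : ℤ) ∣ j → j = 0 := by
    intro j hsj hj hdvd
    by_contra h0
    exact ha k ((hletter j hsj hj hdvd).symm.trans
      (toeplitz_of_abs_lt c hdvd h0 (abs_lt.mpr ⟨by omega, by omega⟩)))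
  obtain ⟨e, hlt, hle, he⟩ := exists_mem_Ioc_dvd_sub (q := period n (k + 1)) (by omega)
    (s + L - 1 - period n (k + 1)) 0
  obtain rfl : e = 0 := horigin e (by omega) (by omega) (by simpa using he)
  refine ⟨?_, ?_, by omega⟩
  · rw [← hletter 0 (by omega) (by omega) (dvd_zero _), toeplitz_zero]
  · by_contra! hle
    have := horigin (-period n (k + 1)) hle (by omega) (dvd_neg.mpr dvd_rfl)
    omega

lemma eq_and_eq_of_window_eq_of_dvd (hc : c ≠ a l)
    (h : window (toeplitz a n c) s L = window (toeplitz a n d) t L)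
    (hs : -(L : ℤ) < s ∧ s ≤ 0) (ht : -(L : ℤ) < t ∧ t ≤ 0) (hL : L ≤ period n (l + 1))
    (hdvd : (period n l : ℤ) ∣ t - s) : c = d ∧ s = t := by
  have h0 := window_eq_window_iff.mp h 0 hs.2 (by omega)
  rw [toeplitz_zero, zero_add] at h0
  obtain rfl : s = t := by
    by_contra hne
    exact hc (h0.trans (toeplitz_of_abs_lt d hdvd (by omega) (abs_lt.mpr ⟨by omega, by omega⟩)))
  exact ⟨by simpa using h0, rfl⟩

end Recognizability

section Counting

open Classical in
/-- The starting positions in `toeplitz a n c` of a system of representatives for the words of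
length `L ∈ (q, period n (k + 2)]`, where `q = period n (k + 1)` and `p = period n k`. For
`c = a (k + 1)` the sequence is `q`-periodic and one period suffices; for other `c` only windows
through the origin are new; and for `c = a k` the windows inside `(-q, q)` are `p`-periodic, so
only the last `p` of them are kept. -/
noncomputable def wordStarts (a : ℕ → A) (n : ℕ → ℕ) (k L : ℕ) (c : A) : Finset ℤ :=
  if c = a (k + 1) then Finset.Ioc (-(period n (k + 1) : ℤ)) 0
  else if c = a k then Finset.Ioc (-(L : ℤ)) 0 \
    Finset.Ioc (-(period n (k + 1) : ℤ)) (period n (k + 1) - L - period n k)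
  else Finset.Ioc (-(L : ℤ)) 0

lemma mem_wordStarts_succ :
    s ∈ wordStarts a n k L (a (k + 1)) ↔ -(period n (k + 1) : ℤ) < s ∧ s ≤ 0 := by
  rw [wordStarts, if_pos rfl, Finset.mem_Ioc]

lemma mem_wordStarts_self (ha : a k ≠ a (k + 1)) :
    s ∈ wordStarts a n k L (a k) ↔ (-(L : ℤ) < s ∧ s ≤ 0) ∧
      ¬ (-(period n (k + 1) : ℤ) < s ∧ s ≤ period n (k + 1) - L - period n k) := by
  rw [wordStarts, if_neg ha, if_pos rfl, Finset.mem_sdiff, Finset.mem_Ioc, Finset.mem_Ioc]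

lemma wordStarts_of_ne (hc : c ≠ a (k + 1)) (hc' : c ≠ a k) :
    wordStarts a n k L c = Finset.Ioc (-(L : ℤ)) 0 := by
  rw [wordStarts, if_neg hc, if_neg hc']

lemma bounds_of_mem_wordStarts (hL : period n (k + 1) < L) (hs : s ∈ wordStarts a n k L c) :
    -(L : ℤ) < s ∧ s ≤ 0 := by
  unfold wordStarts at hs
  split_ifs at hs <;> simp only [Finset.mem_sdiff, Finset.mem_Ioc] at hs <;> omega

lemma window_injOn_wordStarts (hn : ∀ k, 2 ≤ n k) (ha : ∀ k, a k ≠ a (k + 1))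
    (hL : period n (k + 1) < L) (hL' : L ≤ period n (k + 1 + 1))
    (hs : s ∈ wordStarts a n k L c) (ht : t ∈ wordStarts a n k L d)
    (h : window (toeplitz a n c) s L = window (toeplitz a n d) t L) : c = d ∧ s = t := by
  have hs' := bounds_of_mem_wordStarts hL hs
  have ht' := bounds_of_mem_wordStarts hL ht
  by_cases hdvd : (period n (k + 1) : ℤ) ∣ t - s
  · by_cases hc : c = a (k + 1)
    · by_cases hd : d = a (k + 1)
      · subst hc hd
        rw [mem_wordStarts_succ] at hs ht
        have := Int.eq_zero_of_abs_lt_dvd hdvd (abs_lt.mpr ⟨by omega, by omega⟩)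
        exact ⟨rfl, by omega⟩
      · exact (eq_and_eq_of_window_eq_of_dvd hd h.symm ht' hs' hL' (dvd_sub_comm.mp hdvd)).imp
          Eq.symm Eq.symm
    · exact eq_and_eq_of_window_eq_of_dvd hc h hs' ht' hL' hdvd
  · have hdouble := two_mul_period_le hn k
    obtain ⟨rfl, hs_lo, hs_hi⟩ :=
      eq_and_lt_and_le_of_not_dvd hn ha h hL (by omega) (by omega) hdvd
    obtain ⟨rfl, ht_lo, ht_hi⟩ := eq_and_lt_and_le_of_not_dvd hn ha h.symm hL (by omega) (by omega)
      (mt dvd_sub_comm.mp hdvd)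
    rw [mem_wordStarts_self (ha k)] at hs ht
    have := Int.eq_zero_of_abs_lt_dvd (dvd_sub_of_window_eq hn ha h (l := k) (by omega))
      (abs_lt.mpr ⟨by omega, by omega⟩)
    exact ⟨rfl, by omega⟩

lemma exists_mem_wordStarts_succ (hn : ∀ k, 2 ≤ n k) (hL : L ≤ period n (k + 1 + 1))
    (hs : -(period n (k + 1 + 1) : ℤ) < s) (hsL : s + L ≤ period n (k + 1 + 1)) :
    ∃ t ∈ wordStarts a n k L (a (k + 1)), window (toeplitz a n (a (k + 1))) t L =
      window (toeplitz a n (a (k + 1))) s L := by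
  have hpos := period_pos hn (k + 1)
  have hdouble := two_mul_period_le hn (k + 1)
  obtain ⟨t, hlt, hle, hdvd⟩ := exists_mem_Ioc_dvd_sub (q := period n (k + 1)) (by omega)
    (-(period n (k + 1) : ℤ)) s
  exact ⟨t, mem_wordStarts_succ.mpr ⟨hlt, by omega⟩,
    (window_toeplitz_self_periodic hdvd hs hsL (by omega) (by omega)).symm⟩

lemma exists_mem_wordStarts_of_ne (hn : ∀ k, 2 ≤ n k) (ha : a k ≠ a (k + 1))
    (hL : period n (k + 1) < L) (hc : c ≠ a (k + 1)) (hs : -(L : ℤ) < s ∧ s ≤ 0) :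
    ∃ t ∈ wordStarts a n k L c, window (toeplitz a n c) t L = window (toeplitz a n c) s L := by
  by_cases hck : c = a k
  · subst hck
    simp only [mem_wordStarts_self ha]
    by_cases hin : -(period n (k + 1) : ℤ) < s ∧ s ≤ period n (k + 1) - L - period n k
    · have hpos := period_pos hn k
      obtain ⟨t, hlt, hle, hdvd⟩ := exists_mem_Ioc_dvd_sub (q := period n k) (by omega)
        (period n (k + 1) - L - period n k) s
      exact ⟨t, by omega,
        (window_toeplitz_self_periodic hdvd (by omega) (by omega) (by omega) (by omega)).symm⟩
    · exact ⟨s, ⟨hs, hin⟩, rfl⟩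
  · exact ⟨s, by rwa [wordStarts_of_ne hc hck, Finset.mem_Ioc], rfl⟩

lemma exists_mem_wordStarts (hn : ∀ k, 2 ≤ n k) (ha : a k ≠ a (k + 1))
    (hL : period n (k + 1) < L) (hL' : L ≤ period n (k + 1 + 1))
    (hs : -(period n (k + 1 + 1) : ℤ) < s) (hsL : s + L ≤ period n (k + 1 + 1)) :
    ∃ d, (d = c ∨ d = a (k + 1)) ∧ ∃ t ∈ wordStarts a n k L d,
      window (toeplitz a n d) t L = window (toeplitz a n c) s L := by
  by_cases hc : c = a (k + 1)
  · exact ⟨c, .inl rfl, hc ▸ exists_mem_wordStarts_succ hn hL' hs hsL⟩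
  by_cases h0 : -(L : ℤ) < s ∧ s ≤ 0
  · exact ⟨c, .inl rfl, exists_mem_wordStarts_of_ne hn ha hL hc h0⟩
  · rw [window_toeplitz_letter_irrel c (a (k + 1)) hs hsL (by omega)]
    exact ⟨a (k + 1), .inr rfl, exists_mem_wordStarts_succ hn hL' hs hsL⟩

lemma cmpl_eq_sum_card_wordStarts (hn : ∀ k, 2 ≤ n k) (ha : ∀ k, a k ≠ a (k + 1))
    (hL : period n (k + 1) < L) (hL' : L ≤ period n (k + 1 + 1)) {E : Finset A}
    (hE : (E : Set A) = Ak a (k + 1 + 1)) (hmem : a (k + 1) ∈ E) :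
    cmpl a n L = ∑ c ∈ E, (wordStarts a n k L c).card := by
  have hEmem : ∀ c, c ∈ E ↔ c ∈ Ak a (k + 1 + 1) := Set.ext_iff.mp hE
  have hinj : Set.InjOn (fun x : (_ : A) × ℤ => window (toeplitz a n x.1) x.2 L)
      (E.sigma (wordStarts a n k L) : Finset ((_ : A) × ℤ)) := by
    rintro ⟨c, s⟩ hx ⟨d, t⟩ hy hxy
    obtain ⟨rfl, rfl⟩ := window_injOn_wordStarts hn ha hL hL'
      (Finset.mem_sigma.mp hx).2 (Finset.mem_sigma.mp hy).2 hxy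
    rfl
  rw [← Finset.card_sigma, ← Set.ncard_coe_finset, ← hinj.ncard_image, cmpl]
  congr 1
  ext u
  constructor
  · rintro ⟨hu, rfl⟩
    obtain ⟨c, hc, s, hs, hsL, hcs⟩ := exists_window_of_mem_toeplitzLang hn hu hL'
    obtain ⟨d, hd, t, ht, hdt⟩ := exists_mem_wordStarts (c := c) hn (ha k) hL hL' hs hsL
    have hdE : d ∈ E := hd.elim (fun h => h ▸ (hEmem c).mpr hc) (fun h => h ▸ hmem)
    exact ⟨⟨d, t⟩, Finset.mem_sigma.mpr ⟨hdE, ht⟩, hdt.trans hcs.symm⟩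
  · rintro ⟨⟨c, s⟩, hx, rfl⟩
    obtain ⟨hc, hs⟩ := Finset.mem_sigma.mp hx
    have hbounds : -(L : ℤ) < s ∧ s ≤ 0 := bounds_of_mem_wordStarts hL hs
    exact ⟨window_mem_toeplitzLang (s := s) hn ((hEmem c).mp hc) (by omega) (by omega),
      length_window ..⟩

lemma card_wordStarts_succ : (wordStarts a n k L (a (k + 1))).card = period n (k + 1) := by
  simp [wordStarts]

lemma card_wordStarts_self (hn : ∀ k, 2 ≤ n k) (ha : a k ≠ a (k + 1))
    (hL : period n (k + 1) < L) :
    ((wordStarts a n k L (a k)).card : ℤ) = L - period n (k + 1) +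
      min (period n (k + 1) : ℤ) (L - period n (k + 1) + period n k) := by
  have hpos := period_pos hn k
  have hdouble := two_mul_period_le hn k
  rw [wordStarts, if_neg ha, if_pos rfl,
    Finset.card_sdiff_of_subset (Finset.Ioc_subset_Ioc (by omega) (by omega)), Int.card_Ioc,
    Int.card_Ioc]
  omega

lemma card_wordStarts_of_ne (hc : c ≠ a (k + 1)) (hc' : c ≠ a k) :
    (wordStarts a n k L c).card = L := by
  simp [wordStarts_of_ne hc hc']

theorem cmpl_eq (hn : ∀ k, 2 ≤ n k) (ha : ∀ k, a k ≠ a (k + 1))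
    (hfin : (Ak a (k + 1 + 1)).Finite) (hk : a k ∈ Ak a (k + 1 + 1))
    (hk' : a (k + 1) ∈ Ak a (k + 1 + 1))
    (hL : period n (k + 1) < L) (hL' : L ≤ period n (k + 1 + 1)) :
    (cmpl a n L : ℤ) = ((Ak a (k + 1 + 1)).ncard - 1) * L +
      min (period n (k + 1) : ℤ) (L - period n (k + 1) + period n k) := by
  classical
  lift Ak a (k + 1 + 1) to Finset A using hfin with E hE
  have hk'' : a k ∈ E.erase (a (k + 1)) := Finset.mem_erase.mpr ⟨ha k, hk⟩
  have hrest : ∀ c ∈ (E.erase (a (k + 1))).erase (a k),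
      (wordStarts a n k L c).card = L := fun c hc => by
    simp only [Finset.mem_erase] at hc
    exact card_wordStarts_of_ne hc.2.1 hc.1
  have hcard : (((E.erase (a (k + 1))).erase (a k)).card : ℤ) = E.card - 2 := by
    have := Finset.card_erase_add_one hk''
    have := Finset.card_erase_add_one (Finset.mem_coe.mp hk')
    omega
  rw [cmpl_eq_sum_card_wordStarts hn ha hL hL' hE hk', ← Finset.add_sum_erase E _ hk',
    ← Finset.add_sum_erase _ _ hk'', Finset.sum_congr rfl hrest, Finset.sum_const, smul_eq_mul,
    card_wordStarts_succ, Set.ncard_coe_finset]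
  push_cast
  rw [card_wordStarts_self hn (ha k) hL, hcard]
  ring

end Counting

section Ratio

lemma min_le_div_mul {N : ℝ} (hN : 1 ≤ N) (p x : ℝ) :
    min (N * p) (x - (N - 1) * p) ≤ N / (2 * N - 1) * x := by
  rw [div_mul_eq_mul_div, le_div_iff₀ (by linarith)]
  -- The weights `N - 1` and `N` cancel `p` from the average of the two bounds.
  calc min (N * p) (x - (N - 1) * p) * (2 * N - 1)
      = (N - 1) * min (N * p) (x - (N - 1) * p) + N * min (N * p) (x - (N - 1) * p) := by ring
    _ ≤ (N - 1) * (N * p) + N * (x - (N - 1) * p) :=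
        add_le_add (mul_le_mul_of_nonneg_left (min_le_left _ _) (by linarith))
          (mul_le_mul_of_nonneg_left (min_le_right _ _) (by linarith))
    _ = N * x := by ring

lemma min_one_div_mul_le {M N p x : ℝ} (hM : 0 < M) (hN : 1 ≤ N) (hp : 0 ≤ p)
    (hx : N * p ≤ x) (hx' : x ≤ M * (N * p)) :
    min (1 / M) (1 / N) * x ≤ min (N * p) (x - (N - 1) * p) := by
  have hx0 : 0 ≤ x := (by positivity : 0 ≤ N * p).trans hx
  refine le_min ?_ ?_
  · calc min (1 / M) (1 / N) * x ≤ 1 / M * x := by gcongr; exact min_le_left _ _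
      _ ≤ N * p := by rwa [one_div_mul_eq_div, div_le_iff₀' hM]
  · calc min (1 / M) (1 / N) * x ≤ 1 / N * x := by gcongr; exact min_le_right _ _
      _ = x - (N - 1) * (x / N) := by field_simp; ring
      _ ≤ x - (N - 1) * p := by
        have : p ≤ x / N := by rwa [le_div_iff₀' (by linarith)]
        gcongr

lemma cmpl_div_eq (hn : ∀ k, 2 ≤ n k) (ha : ∀ k, a k ≠ a (k + 1))
    (hfin : (Ak a (k + 1 + 1)).Finite) (hk : a k ∈ Ak a (k + 1 + 1))
    (hk' : a (k + 1) ∈ Ak a (k + 1 + 1))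
    (hL : period n (k + 1) < L) (hL' : L ≤ period n (k + 1 + 1)) :
    (cmpl a n L : ℝ) / L = (Ak a (k + 1 + 1)).ncard - 1 +
      min (n k * period n k : ℝ) (L - (n k - 1) * period n k) / L := by
  have hL0 : (L : ℝ) ≠ 0 := by exact_mod_cast (by omega : L ≠ 0)
  have hcmpl : (cmpl a n L : ℝ) = ((Ak a (k + 1 + 1)).ncard - 1) * L +
      min (period n (k + 1) : ℝ) (L - period n (k + 1) + period n k) := by
    exact_mod_cast cmpl_eq hn ha hfin hk hk' hL hL'
  rw [hcmpl, add_div, mul_div_cancel_right₀ _ hL0, period_succ]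
  push_cast
  ring_nf

lemma le_cmpl_div (hn : ∀ k, 2 ≤ n k) (ha : ∀ k, a k ≠ a (k + 1))
    (hfin : (Ak a (k + 1 + 1)).Finite) (hk : a k ∈ Ak a (k + 1 + 1))
    (hk' : a (k + 1) ∈ Ak a (k + 1 + 1))
    (hL : period n (k + 1) < L) (hL' : L ≤ period n (k + 1 + 1)) :
    (Ak a (k + 1 + 1)).ncard - 1 + min (1 / (n (k + 1) : ℝ)) (1 / n k) ≤ (cmpl a n L : ℝ) / L := by
  have hL0 : (0 : ℝ) < L := by exact_mod_cast (by omega : 0 < L)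
  have hN : (1 : ℝ) ≤ n k := by exact_mod_cast one_le_two.trans (hn k)
  have hM : (0 : ℝ) < n (k + 1) := by exact_mod_cast two_pos.trans_le (hn (k + 1))
  rw [cmpl_div_eq hn ha hfin hk hk' hL hL']
  gcongr
  rw [le_div_iff₀ hL0]
  refine min_one_div_mul_le hM hN (Nat.cast_nonneg _) ?_ ?_
  · exact_mod_cast period_succ n k ▸ hL.le
  · exact_mod_cast period_succ n k ▸ period_succ n (k + 1) ▸ hL'

lemma cmpl_div_le (hn : ∀ k, 2 ≤ n k) (ha : ∀ k, a k ≠ a (k + 1))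
    (hfin : (Ak a (k + 1 + 1)).Finite) (hk : a k ∈ Ak a (k + 1 + 1))
    (hk' : a (k + 1) ∈ Ak a (k + 1 + 1))
    (hL : period n (k + 1) < L) (hL' : L ≤ period n (k + 1 + 1)) :
    (cmpl a n L : ℝ) / L ≤ (Ak a (k + 1 + 1)).ncard - 1 + n k / (2 * n k - 1) := by
  have hL0 : (0 : ℝ) < L := by exact_mod_cast (by omega : 0 < L)
  have hN : (1 : ℝ) ≤ n k := by exact_mod_cast one_le_two.trans (hn k)
  rw [cmpl_div_eq hn ha hfin hk hk' hL hL']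
  exact (add_le_add_iff_left _).mpr ((div_le_iff₀ hL0).mpr (min_le_div_mul hN _ _))

lemma cmpl_div_two_mul_period_sub (hn : ∀ k, 2 ≤ n k) (ha : ∀ k, a k ≠ a (k + 1))
    (hfin : (Ak a (k + 1 + 1)).Finite) (hk : a k ∈ Ak a (k + 1 + 1))
    (hk' : a (k + 1) ∈ Ak a (k + 1 + 1)) (hL : L = 2 * period n (k + 1) - period n k) :
    (cmpl a n L : ℝ) / L = (Ak a (k + 1 + 1)).ncard - 1 + n k / (2 * n k - 1) := by
  have hpos := period_pos hn k
  have hdouble := two_mul_period_le hn k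
  have hdouble' := two_mul_period_le hn (k + 1)
  have hp : (period n k : ℝ) ≠ 0 := by exact_mod_cast hpos.ne'
  have hL_eq : (L : ℝ) = (2 * n k - 1) * period n k := by
    rw [hL, Nat.cast_sub (by omega), period_succ]
    push_cast
    ring
  rw [cmpl_div_eq hn ha hfin hk hk' (by omega) (by omega), hL_eq,
    show (2 * n k - 1) * period n k - (n k - 1) * period n k = (n k * period n k : ℝ) by ring,
    min_self, mul_div_mul_right _ _ hp]

end Ratio

end SimpleToeplitz

open SimpleToeplitz in
theorem stmt11_general {A : Type*} {a : ℕ → A} {n : ℕ → ℕ} (hn : ∀ k, 2 ≤ n k)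
    (ha : ∀ k, a k ≠ a (k + 1)) {k : ℕ} (hfin : (Ak a (k + 1 + 1)).Finite)
    (hk : a k ∈ Ak a (k + 1 + 1)) (hk' : a (k + 1) ∈ Ak a (k + 1 + 1)) :
    (∀ L : ℕ, lenPrev a n (k + 1) + 2 ≤ L → L ≤ (ToeplitzBlock a n (k + 1)).length + 1 →
      min (((Ak a (k + 1 + 1)).ncard : ℝ) - ((n (k + 1) : ℝ) - 1) / n (k + 1))
          (((Ak a (k + 1 + 1)).ncard : ℝ) - ((n k : ℝ) - 1) / n k)
        ≤ (cmpl a n L : ℝ) / L) ∧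
    (((Ak a (k + 1 + 1)).ncard : ℝ) - 1 <
      min (((Ak a (k + 1 + 1)).ncard : ℝ) - ((n (k + 1) : ℝ) - 1) / n (k + 1))
          (((Ak a (k + 1 + 1)).ncard : ℝ) - ((n k : ℝ) - 1) / n k)) ∧
    (∀ L : ℕ, lenPrev a n (k + 1) + 2 ≤ L → L ≤ (ToeplitzBlock a n (k + 1)).length + 1 →
      (cmpl a n L : ℝ) / L
        ≤ ((Ak a (k + 1 + 1)).ncard : ℝ) - ((n k : ℝ) - 1) / (2 * n k - 1)) ∧
    (lenPrev a n (k + 1) + 2 ≤ 2 * lenPrev a n (k + 1) + 1 - lenPrev a n k ∧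
      2 * lenPrev a n (k + 1) + 1 - lenPrev a n k ≤ (ToeplitzBlock a n (k + 1)).length + 1 ∧
      (cmpl a n (2 * lenPrev a n (k + 1) + 1 - lenPrev a n k) : ℝ) /
          (2 * lenPrev a n (k + 1) + 1 - lenPrev a n k : ℕ)
        = ((Ak a (k + 1 + 1)).ncard : ℝ) - ((n k : ℝ) - 1) / (2 * n k - 1)) ∧
    ((Ak a (k + 1 + 1)).ncard : ℝ) - ((n k : ℝ) - 1) / (2 * n k - 1)
      ≤ ((Ak a (k + 1 + 1)).ncard : ℝ) - 1 / 3 := by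
  have hlen := length_toeplitzBlock (a := a) hn (k + 1)
  have hprev : lenPrev a n (k + 1) + 1 = period n (k + 1) := lenPrev_add_one hn (k + 1)
  have hprev' : lenPrev a n k + 1 = period n k := lenPrev_add_one hn k
  have hdouble := two_mul_period_le hn k
  have hdouble' := two_mul_period_le hn (k + 1)
  have hN : (2 : ℝ) ≤ n k := by exact_mod_cast hn k
  have hM : (2 : ℝ) ≤ n (k + 1) := by exact_mod_cast hn (k + 1)
  set m := ((Ak a (k + 1 + 1)).ncard : ℝ)
  have hone_div : ∀ x : ℝ, 2 ≤ x → m - (x - 1) / x = m - 1 + 1 / x := fun x hx => by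
    field_simp
    ring
  have hmin : min (m - ((n (k + 1) : ℝ) - 1) / n (k + 1)) (m - ((n k : ℝ) - 1) / n k) =
      m - 1 + min (1 / (n (k + 1) : ℝ)) (1 / n k) := by
    rw [hone_div _ hN, hone_div _ hM, min_add_add_left]
  have hmax : m - ((n k : ℝ) - 1) / (2 * n k - 1) = m - 1 + n k / (2 * n k - 1) := by
    have hsum : ((n k : ℝ) - 1) / (2 * n k - 1) + n k / (2 * n k - 1) = 1 := by
      rw [← add_div, div_eq_one_iff_eq (by linarith)]
      ring
    linarith
  rw [hmin, hmax]
  refine ⟨fun L hL hL' => le_cmpl_div hn ha hfin hk hk' (by omega) (by omega), ?_,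
    fun L hL hL' => cmpl_div_le hn ha hfin hk hk' (by omega) (by omega),
    ⟨by omega, by omega, cmpl_div_two_mul_period_sub hn ha hfin hk hk' (by omega)⟩, ?_⟩
  · exact lt_add_of_pos_right _ (by positivity)
  · have : (n k : ℝ) / (2 * n k - 1) ≤ 2 / 3 := by
      rw [div_le_div_iff₀ (by linarith) (by norm_num)]
      linarith
    linarith

/-- bounds for `C(L)/L` on the range `|p (k-1)| + 2 ≤ L ≤ |p k| + 1`
for `k ≥ N0 + 1`, and the exact maximum, attained at `L = 2|p (k-1)| - |p (k-2)| + 1`. -/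
theorem stmt11 {A : Type*} [Fintype A] [Nonempty A]
    (a : ℕ → A) (n : ℕ → ℕ) (hn : ∀ k, 2 ≤ n k) (ha : ∀ k, a k ≠ a (k + 1))
    (hAev : 2 ≤ (Aev a).ncard)
    (N0 : ℕ) (hN0 : IsLeast {N | ∀ k, N ≤ k → Ak a k = Aev a} N0)
    (k : ℕ) (hk : N0 + 1 ≤ k) :
    (∀ L : ℕ, lenPrev a n k + 2 ≤ L → L ≤ (ToeplitzBlock a n k).length + 1 →
      min (((Aev a).ncard : ℝ) - ((n k : ℝ) - 1) / (n k : ℝ))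
          (((Aev a).ncard : ℝ) - ((n (k - 1) : ℝ) - 1) / (n (k - 1) : ℝ))
        ≤ (cmpl a n L : ℝ) / (L : ℝ)) ∧
    (((Aev a).ncard : ℝ) - 1 <
      min (((Aev a).ncard : ℝ) - ((n k : ℝ) - 1) / (n k : ℝ))
          (((Aev a).ncard : ℝ) - ((n (k - 1) : ℝ) - 1) / (n (k - 1) : ℝ))) ∧
    (∀ L : ℕ, lenPrev a n k + 2 ≤ L → L ≤ (ToeplitzBlock a n k).length + 1 →
      (cmpl a n L : ℝ) / (L : ℝ)
        ≤ ((Aev a).ncard : ℝ) - ((n (k - 1) : ℝ) - 1) / (2 * (n (k - 1) : ℝ) - 1)) ∧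
    (lenPrev a n k + 2 ≤ 2 * lenPrev a n k + 1 - lenPrev a n (k - 1) ∧
      2 * lenPrev a n k + 1 - lenPrev a n (k - 1) ≤ (ToeplitzBlock a n k).length + 1 ∧
      (cmpl a n (2 * lenPrev a n k + 1 - lenPrev a n (k - 1)) : ℝ) /
          ((2 * lenPrev a n k + 1 - lenPrev a n (k - 1) : ℕ) : ℝ)
        = ((Aev a).ncard : ℝ) - ((n (k - 1) : ℝ) - 1) / (2 * (n (k - 1) : ℝ) - 1)) ∧
    (((Aev a).ncard : ℝ) - ((n (k - 1) : ℝ) - 1) / (2 * (n (k - 1) : ℝ) - 1)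
      ≤ ((Aev a).ncard : ℝ) - 1 / 3) := by
  obtain ⟨k, rfl⟩ := Nat.exists_eq_add_of_le' (show 1 ≤ k by omega)
  have hstable : ∀ l, N0 ≤ l → Ak a l = Aev a := hN0.1
  have hmem : ∀ l, N0 ≤ l → a l ∈ Aev a := fun l hl => hstable l hl ▸ ⟨l, le_rfl, rfl⟩
  have hA : Ak a (k + 1 + 1) = Aev a := hstable _ (by omega)
  exact hA ▸ stmt11_general hn ha (Set.toFinite _) (hA ▸ hmem k (by omega))
    (hA ▸ hmem (k + 1) (by omega))
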